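/- Consider the matching market with hospitals H = {h_1,h_2,h_3}, each of capacity 2, and doctors D = {f,m,s_1,s_2,s_3,s_4} where {f,m} is the unique couple and s_1,…,s_4 are single. Suppose the hospitals rank individual doctors by: h_1: s_3 > s_4 > s_1 > f > m > s_2 > ∅; h_2: s_4 > s_3 > f > m > s_1 > s_2 > ∅; h_3: s_3 > s_4 > f > m > s_1 > s_2 > ∅ (so every hospital ranks f above m, and the profile satisfies the CPC property). The single doctors' preferences are s_1: h_2 > h_1 > h_3 > ∅; s_2: h_3 > h_1 > h_2 > ∅; s_3: h_1 > h_2 > h_3 > ∅; s_4: h_2 > h_1 > h_3 > ∅; the couple's members have individual preferences f: h_1 > h_3 > h_2 > ∅ and m: h_2 > h_1 > h_3 > ∅; and the couple's preference ranks (h_1,h_2) > (h_1,h_1) > (h_1,h_3) > (h_3,h_3) > (h_3,h_2) > (h_3,h_1) > (h_2,h_2) > (h_2,h_1) > (h_2,h_3), with every pair having a component equal to ∅ ranked below all of these (this couple preference satisfies the RF property). Then for every choice of the hospitals' preferences over feasible sets of doctors that are responsive with respect to their respective individual rankings, no stable matching exists. -/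

import Mathlib

/-!
The singles `s₃` and `s₄` are each ranked first by their own favourite hospital, so in a stable
matching `s₃` is at `h₁` and `s₄` at `h₂`. Given that, `h₁` would take `s₁` against anyone
else, so `s₁` is at `h₂` or at `h₁`.

* If `s₁` is at `h₂`, then `h₂ = {s₄, s₁}` would exchange `s₁` for `m`, while `h₁` either
  has `f` already or would take `f` in place of its second doctor, who is `m` or `s₂` if present.
  So the couple blocks with its favourite pair `(h₁, h₂)`.
* If `s₁` is at `h₁`, then `h₁ = {s₃, s₁}`, and `s₁` and `h₂` block unless `f` or `m` is at `h₂`.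
  In that case the couple is in none of the pairs `(h₁, ·)`, `(h₃, h₃)`, so it prefers `(h₃, h₃)`
  to its assignment. As `h₃` holds only doctors among `f, m, s₂`, and not both `f` and `m`,
  responsiveness makes `{f, m}` better for `h₃`, and the couple blocks with `(h₃, h₃)`.

Responsiveness enters only through two moves, adding a doctor to a free slot (`Responsive.add`) and
exchanging a doctor for a better one (`Responsive.swap`); `interested_of_one_better` packages them.
-/

namespace CouplesMarket

/-- A strict preference: an irreflexive, transitive, total (trichotomous) relation,
i.e. the strict part of a linear order. -/
def IsStrictPref {α : Type*} (P : α → α → Prop) : Prop :=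
  (∀ x, ¬ P x x) ∧ (∀ x y z, P x y → P y z → P x z) ∧ (∀ x y, x ≠ y → P x y ∨ P y x)

/-- A doctor's preference over `H ∪ {∅}` (`none` = unmatched): a strict linear order
ranking every hospital above `∅`. -/
def IsDoctorPref {H : Type*} (P : Option H → Option H → Prop) : Prop :=
  IsStrictPref P ∧ ∀ h : H, P (some h) none

/-- A hospital's preference over individual doctors, i.e. over `D ∪ {∅}`:
a strict linear order ranking every doctor above `∅`. -/
def IsHospIndivPref {D : Type*} (P : Option D → Option D → Prop) : Prop :=
  IsStrictPref P ∧ ∀ d : D, P (some d) none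

/-- A hospital's preference over feasible sets of doctors: a strict linear order on
the sets of cardinality at most `κ`. -/
def IsFeasiblePref {D : Type*} (κ : ℕ) (P : Finset D → Finset D → Prop) : Prop :=
  (∀ A, ¬ P A A) ∧
  (∀ A B C : Finset D, A.card ≤ κ → B.card ≤ κ → C.card ≤ κ → P A B → P B C → P A C) ∧
  (∀ A B : Finset D, A.card ≤ κ → B.card ≤ κ → A ≠ B → P A B ∨ P B A)

/-- The finset associated to an element of `D ∪ {∅}`. -/
def optSet {D : Type*} [DecidableEq D] : Option D → Finset D
  | none => ∅
  | some d => {d}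

/-- Responsiveness of a hospital's preference `P` over feasible sets (w.r.t. capacity `κ`)
with respect to a preference `Pt` over individual doctors. -/
def Responsive {D : Type*} [Fintype D] [DecidableEq D] (κ : ℕ)
    (P : Finset D → Finset D → Prop) (Pt : Option D → Option D → Prop) : Prop :=
  (∀ x y : Option D, P (optSet x) (optSet y) ↔ Pt x y) ∧
  (∀ D' D1 D2 : Finset D, D' ≠ Finset.univ → Disjoint D1 D' → Disjoint D2 D' →
    (D' ∪ D1).card ≤ κ → (D' ∪ D2).card ≤ κ →
    (P (D' ∪ D1) (D' ∪ D2) ↔ P D1 D2))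

/-- A matching: an assignment of doctors to hospitals (or to `none`) respecting capacities.
(The set matched to a hospital `h` is recovered as the set of doctors assigned to `h`.) -/
structure Matching (H D : Type*) [Fintype D] [DecidableEq H] (κ : H → ℕ) where
  assign : D → Option H
  card_le : ∀ h : H, (Finset.univ.filter (fun d => assign d = some h)).card ≤ κ h

/-- The set of doctors matched to hospital `h`. -/
def Matching.toSet {H D : Type*} [Fintype D] [DecidableEq H] {κ : H → ℕ}
    (μ : Matching H D κ) (h : H) : Finset D :=
  Finset.univ.filter (fun d => μ.assign d = some h)

/-- Hospital `h` is interested in the set of doctors `A` at matching `μ`. -/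
def hospInterested {H D : Type*} [Fintype D] [DecidableEq H] [DecidableEq D] {κ : H → ℕ}
    (Ph : H → Finset D → Finset D → Prop) (μ : Matching H D κ) (h : H) (A : Finset D) : Prop :=
  ∃ B ⊆ μ.toSet h, ((μ.toSet h \ B) ∪ A).card ≤ κ h ∧ Ph h ((μ.toSet h \ B) ∪ A) (μ.toSet h)

/-- A hospital `h` and a single doctor `s` block the matching `μ`. -/
def blocksSingle {H D : Type*} [Fintype D] [DecidableEq H] [DecidableEq D] {κ : H → ℕ}
    (Pd : D → Option H → Option H → Prop) (Ph : H → Finset D → Finset D → Prop)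
    (μ : Matching H D κ) (h : H) (s : D) : Prop :=
  Pd s (some h) (μ.assign s) ∧ hospInterested Ph μ h {s}

/-- A pair of hospitals `(hf, hm)` and the couple `{f, m}` (with preference `Pc`)
block the matching `μ`. -/
def blocksCouple {H D : Type*} [Fintype D] [DecidableEq H] [DecidableEq D] {κ : H → ℕ}
    (Ph : H → Finset D → Finset D → Prop)
    (Pc : Option H × Option H → Option H × Option H → Prop)
    (f m : D) (μ : Matching H D κ) (hf hm : H) : Prop :=
  Pc (some hf, some hm) (μ.assign f, μ.assign m) ∧
  (hf ≠ hm → μ.assign f ≠ some hf → μ.assign m ≠ some hm →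
    hospInterested Ph μ hf {f} ∧ hospInterested Ph μ hm {m}) ∧
  (hf ≠ hm → μ.assign f = some hf → μ.assign m ≠ some hm → hospInterested Ph μ hm {m}) ∧
  (hf ≠ hm → μ.assign m = some hm → μ.assign f ≠ some hf → hospInterested Ph μ hf {f}) ∧
  (hf = hm → hospInterested Ph μ hf {f, m})

/-- Stability of a matching `μ` in a market whose couples are `{fd i, md i}`, `i : Fin k`,
all other doctors being single. -/
def Stable {H D : Type*} [Fintype D] [DecidableEq H] [DecidableEq D] {κ : H → ℕ} {k : ℕ}
    (fd md : Fin k → D)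
    (Pd : D → Option H → Option H → Prop)
    (Pc : Fin k → Option H × Option H → Option H × Option H → Prop)
    (Ph : H → Finset D → Finset D → Prop)
    (μ : Matching H D κ) : Prop :=
  (∀ (h : H) (s : D), (∀ i, s ≠ fd i ∧ s ≠ md i) → ¬ blocksSingle Pd Ph μ h s) ∧
  (∀ (i : Fin k) (hf hm : H), ¬ blocksCouple Ph (Pc i) (fd i) (md i) μ hf hm)

/-- A couple's preference over `(H ∪ {∅})²`: a strict linear order ranking every pair of
hospitals above every pair with at least one unmatched component. -/
def IsCouplePref {H : Type*} (P : Option H × Option H → Option H × Option H → Prop) : Prop :=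
  IsStrictPref P ∧
  ∀ (h h' : H) (p : Option H × Option H), (p.1 = none ∨ p.2 = none) → P (some h, some h') p

/-- Responsiveness of a couple's preference with respect to the members'
individual preferences `Pf` and `Pm`. -/
def ResponsiveCouple {H : Type*} (Pf Pm : Option H → Option H → Prop)
    (P : Option H × Option H → Option H × Option H → Prop) : Prop :=
  (∀ h h1 h2 : Option H, P (h, h1) (h, h2) ↔ Pm h1 h2) ∧
  (∀ h h1 h2 : Option H, P (h1, h) (h2, h) ↔ Pf h1 h2)

/-- `Pbar` satisfies RVT (responsiveness violated only for togetherness) with respect to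
the members' individual preferences `Pf`, `Pm`. -/
def RVT {H : Type*} (Pf Pm : Option H → Option H → Prop)
    (Pbar : Option H × Option H → Option H × Option H → Prop) : Prop :=
  ∃ P : Option H × Option H → Option H × Option H → Prop,
    IsStrictPref P ∧ ResponsiveCouple Pf Pm P ∧
    (∀ (h : H) (p : Option H × Option H), P (some h, some h) p → Pbar (some h, some h) p) ∧
    (∀ p q : Option H × Option H, p.1 ≠ p.2 → q.1 ≠ q.2 → (P p q ↔ Pbar p q))

/-- The RF ("responsive for F") property of a collection of couples' preferences:
`(h,h) P_c (h',h)` implies `h P_f h'`. -/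
def RF {H : Type*} {k : ℕ} (Pf : Fin k → Option H → Option H → Prop)
    (Pc : Fin k → Option H × Option H → Option H × Option H → Prop) : Prop :=
  ∀ (i : Fin k) (h h' : H), Pc i (some h, some h) (some h', some h) → Pf i (some h) (some h')

/-- The SRF ("strong RF") property of a collection of couples' preferences. -/
def SRF {H : Type*} {k : ℕ} (Pf Pm : Fin k → Option H → Option H → Prop)
    (Pc : Fin k → Option H × Option H → Option H × Option H → Prop) : Prop :=
  RF Pf Pc ∧
  ∀ (i : Fin k) (h h' : H), (∃ h'' : H, Pf i (some h'') (some h)) →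
    Pc i (some h, some h) (some h, some h') → Pm i (some h') (some h) →
    Pf i (some h') (some h)

/-- SCPI ("strong CPI") property of a common preference `P0` of the hospitals over
individual doctors. -/
def SCPI {H D : Type*} {k : ℕ} (κ : H → ℕ) (fd md : Fin k → D)
    (P0 : Option D → Option D → Prop) : Prop :=
  ∀ i : Fin k,
    ((∃ d : D, d ≠ md i ∧ P0 (some (md i)) (some d)) →
      ({d : D | P0 (some (fd i)) (some d) ∧ P0 (some d) (some (md i))}.ncard = 0 ∨
        ∀ h : H, {d : D | P0 (some d) (some (md i))}.ncard < κ h)) ∧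
    ((∀ d : D, d ≠ md i → P0 (some d) (some (md i))) →
      {d : D | P0 (some (fd i)) (some d) ∧ P0 (some d) (some (md i))}.ncard ≤ 1)


/-- Strict preference induced by a rank function (smaller rank = better). -/
def prefOfRank {α : Type*} (r : α → ℕ) : α → α → Prop := fun x y => r x < r y

/-- Example 3: hospitals `H = {h₁, h₂, h₃} = Fin 3`, doctors
`D = {f, m, s₁, s₂, s₃, s₄} = Fin 6` (with `f = 0`, `m = 1`, `sᵢ = i + 1`), the unique
couple being `{f, m}`.  The hospitals' individual rankings are
`h₁ : s₃ > s₄ > s₁ > f > m > s₂ > ∅`, `h₂ : s₄ > s₃ > f > m > s₁ > s₂ > ∅`,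
`h₃ : s₃ > s₄ > f > m > s₁ > s₂ > ∅` (every hospital ranks `f` above `m`, so the
profile satisfies the CPC property). -/
def Pt11 : Fin 3 → Option (Fin 6) → Option (Fin 6) → Prop :=
  fun h => prefOfRank (fun x => x.elim 6
    (![![3, 4, 2, 5, 0, 1], ![2, 3, 4, 5, 1, 0], ![2, 3, 4, 5, 0, 1]] h))

/-- The individual preferences of the doctors in Example 3:
`f : h₁ > h₃ > h₂ > ∅`, `m : h₂ > h₁ > h₃ > ∅`, `s₁ : h₂ > h₁ > h₃ > ∅`,
`s₂ : h₃ > h₁ > h₂ > ∅`, `s₃ : h₁ > h₂ > h₃ > ∅`, `s₄ : h₂ > h₁ > h₃ > ∅`. -/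
def Pd11 : Fin 6 → Option (Fin 3) → Option (Fin 3) → Prop :=
  fun d => prefOfRank (fun x => x.elim 3
    (![![0, 2, 1], ![1, 0, 2], ![1, 0, 2], ![1, 2, 0], ![0, 1, 2], ![1, 0, 2]] d))

/-- The couple's ranking of the pairs of hospitals in Example 3:
`(h₁,h₂) > (h₁,h₁) > (h₁,h₃) > (h₃,h₃) > (h₃,h₂) > (h₃,h₁) > (h₂,h₂) > (h₂,h₁) > (h₂,h₃)`
(rows indexed by `f`'s hospital, columns by `m`'s hospital); this couple preference
satisfies the RF property. -/
def crank11 : Fin 3 → Fin 3 → ℕ := ![![1, 0, 2], ![7, 6, 8], ![5, 4, 3]]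

/-! ### Consequences of responsiveness -/

instance (h : Fin 3) (x y : Option (Fin 6)) : Decidable (Pt11 h x y) :=
  inferInstanceAs (Decidable (_ < _))

instance (d : Fin 6) (x y : Option (Fin 3)) : Decidable (Pd11 d x y) :=
  inferInstanceAs (Decidable (_ < _))

lemma Responsive.add {h : Fin 3} {P : Finset (Fin 6) → Finset (Fin 6) → Prop}
    (hr : Responsive 2 P (Pt11 h)) {T : Finset (Fin 6)} {d : Fin 6}
    (hd : d ∉ T) (hT : T.card < 2) : P (insert d T) T := by
  have hne : T ≠ Finset.univ := fun e => hd (e ▸ Finset.mem_univ d)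
  have hP : P {d} ∅ := (hr.1 (some d) none).2 (by
    have ht : ∀ (h : Fin 3) (d : Fin 6), Pt11 h (some d) none := by decide
    exact ht h d)
  have key := (hr.2 T {d} ∅ hne (by simpa using hd) (by simp)
    (by rw [Finset.union_comm, ← Finset.insert_eq, Finset.card_insert_of_notMem hd]; omega)
    (by rw [Finset.union_empty]; omega)).2 hP
  rwa [Finset.union_comm, ← Finset.insert_eq, Finset.union_empty] at key

lemma Responsive.swap {h : Fin 3} {P : Finset (Fin 6) → Finset (Fin 6) → Prop}
    (hr : Responsive 2 P (Pt11 h)) {T : Finset (Fin 6)} {d e : Fin 6}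
    (hd : d ∉ T) (he : e ∉ T) (hT : T.card < 2) (hde : Pt11 h (some d) (some e)) :
    P (insert d T) (insert e T) := by
  have hne : T ≠ Finset.univ := fun e => hd (e ▸ Finset.mem_univ d)
  have hP : P {d} {e} := (hr.1 (some d) (some e)).2 hde
  have key := (hr.2 T {d} {e} hne (by simpa using hd) (by simpa using he)
    (by rw [Finset.union_comm, ← Finset.insert_eq, Finset.card_insert_of_notMem hd]; omega)
    (by rw [Finset.union_comm, ← Finset.insert_eq, Finset.card_insert_of_notMem he]; omega)).2 hP
  rwa [Finset.union_comm, ← Finset.insert_eq, Finset.union_comm, ← Finset.insert_eq] at key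

lemma Matching.mem_toSet {μ : Matching (Fin 3) (Fin 6) (fun _ => 2)} {h : Fin 3} {d : Fin 6} :
    d ∈ μ.toSet h ↔ μ.assign d = some h := by
  simp [Matching.toSet]

/-- A hospital of capacity two is interested in an outside doctor `d` as soon as at most one of its
doctors, `c`, is not ranked below `d`: it has a free slot, or one of its two doctors is worse. -/
lemma interested_of_one_better {Ph : Fin 3 → Finset (Fin 6) → Finset (Fin 6) → Prop}
    (hresp : ∀ h, Responsive 2 (Ph h) (Pt11 h))
    {μ : Matching (Fin 3) (Fin 6) (fun _ => 2)} {h : Fin 3} {d : Fin 6} (c : Fin 6)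
    (hd : μ.assign d ≠ some h)
    (hc : ∀ e, μ.assign e = some h → e = c ∨ Pt11 h (some d) (some e)) :
    hospInterested Ph μ h {d} := by
  have hdT : d ∉ μ.toSet h := fun hm => hd (Matching.mem_toSet.1 hm)
  by_cases hlt : (μ.toSet h).card < 2
  · refine ⟨∅, Finset.empty_subset _, ?_, ?_⟩ <;>
      rw [Finset.sdiff_empty, Finset.union_comm, ← Finset.insert_eq]
    · rw [Finset.card_insert_of_notMem hdT]; exact hlt
    · exact (hresp h).add hdT hlt
  · have h2 : (μ.toSet h).card = 2 := le_antisymm (μ.card_le h) (by omega)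
    obtain ⟨e, heT, hec⟩ := Finset.exists_mem_ne (by omega : 1 < (μ.toSet h).card) c
    have hde := (hc e (Matching.mem_toSet.1 heT)).resolve_left hec
    have hdT' : d ∉ (μ.toSet h).erase e := fun hm => hdT (Finset.mem_of_mem_erase hm)
    have hcard : ((μ.toSet h).erase e).card = 1 := by rw [Finset.card_erase_of_mem heT, h2]
    refine ⟨{e}, by simpa using heT, ?_, ?_⟩ <;>
      rw [Finset.sdiff_singleton_eq_erase, Finset.union_comm, ← Finset.insert_eq]
    · rw [Finset.card_insert_of_notMem hdT', hcard]
    · have key := (hresp h).swap hdT' (Finset.notMem_erase e _) (by omega) hde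
      rwa [Finset.insert_erase heT] at key

/-! ### The couple and the capacities -/

/-- The couple prefers `(a, b)` to every assignment that is not made of two hospitals ranked weakly
above `(a, b)`; this covers assignments leaving a member unmatched. -/
lemma couple_prefers
    {Pc : Option (Fin 3) × Option (Fin 3) → Option (Fin 3) × Option (Fin 3) → Prop}
    (hPc : IsCouplePref Pc)
    (hchain : ∀ a b a' b' : Fin 3, crank11 a b < crank11 a' b' →
      Pc (some a, some b) (some a', some b')) (a b : Fin 3) (x y : Option (Fin 3))
    (hxy : ∀ a' b', x = some a' → y = some b' → crank11 a b < crank11 a' b') :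
    Pc (some a, some b) (x, y) := by
  cases x with
  | none => exact hPc.2 a b _ (Or.inl rfl)
  | some a' =>
    cases y with
    | none => exact hPc.2 a b _ (Or.inr rfl)
    | some b' => exact hchain _ _ _ _ (hxy a' b' rfl rfl)

/-- Hospital `h₃` prefers the couple to any set of doctors among `f, m, s₂` without both members. -/
lemma couple_better {P : Finset (Fin 6) → Finset (Fin 6) → Prop}
    (hP : IsFeasiblePref 2 P) (hr : Responsive 2 P (Pt11 2)) {T : Finset (Fin 6)}
    (hT : T ⊆ {0, 1, 3}) (hfm : ¬ (0 ∈ T ∧ 1 ∈ T)) : P {0, 1} T := by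
  have hcases : ∀ T : Finset (Fin 6), T ⊆ {0, 1, 3} → ¬ (0 ∈ T ∧ 1 ∈ T) →
      T = ∅ ∨ T = {0} ∨ T = {1} ∨ T = {3} ∨ T = {0, 3} ∨ T = {1, 3} := by decide
  have h0 : P {0, 1} {1} := hr.add (d := 0) (by decide) (by decide)
  have h1 : P {1} {3} := hr.swap (T := ∅) (d := 1) (e := 3) (by decide) (by decide) (by decide)
    (by decide)
  have h2 : P {1} ∅ := hr.add (d := 1) (T := ∅) (by decide) (by decide)
  rcases hcases T hT hfm with rfl | rfl | rfl | rfl | rfl | rfl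
  · exact hP.2.1 _ {1} _ (by decide) (by decide) (by decide) h0 h2
  · have key : P {1, 0} {0} := hr.add (by decide) (by decide)
    rwa [Finset.pair_comm] at key
  · exact h0
  · exact hP.2.1 _ {1} _ (by decide) (by decide) (by decide) h0 h1
  · have key : P {1, 0} {3, 0} := hr.swap (by decide) (by decide) (by decide) (by decide)
    rwa [Finset.pair_comm, Finset.pair_comm 3 0] at key
  · have key : P {0, 1} {3, 1} := hr.swap (by decide) (by decide) (by decide) (by decide)
    rwa [Finset.pair_comm 3 1] at key

/-- Capacity two: two distinct doctors at `h` leave room for nobody else. -/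
lemma full {μ : Matching (Fin 3) (Fin 6) (fun _ => 2)} {h : Fin 3} {a b c : Fin 6}
    (hab : a ≠ b) (ha : μ.assign a = some h) (hb : μ.assign b = some h)
    (hc : μ.assign c = some h) : c = a ∨ c = b := by
  by_contra! hne
  have hsub : ({c, a, b} : Finset (Fin 6)) ⊆ μ.toSet h := by
    intro x hx
    simp only [Finset.mem_insert, Finset.mem_singleton] at hx
    rcases hx with rfl | rfl | rfl <;> exact Matching.mem_toSet.2 ‹_›
  have h3 : ({c, a, b} : Finset (Fin 6)).card = 3 := by
    rw [Finset.card_eq_three]; exact ⟨c, a, b, hne.1, hne.2, hab, rfl⟩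
  have hle : (μ.toSet h).card ≤ 2 := μ.card_le h
  have := Finset.card_le_card hsub
  omega

/-! ### Nonexistence of a stable matching -/

/-- In the market of Example 3, where the couple's preference ranks the nine pairs of
hospitals as `(h₁,h₂) > (h₁,h₁) > (h₁,h₃) > (h₃,h₃) > (h₃,h₂) > (h₃,h₁) > (h₂,h₂) >
(h₂,h₁) > (h₂,h₃)` and ranks every pair with an unmatched component below all of them,
no choice of hospital preferences over feasible sets responsive with respect to the
hospitals' respective individual rankings admits a stable matching. -/
theorem stmt_11
    (Pc : Option (Fin 3) × Option (Fin 3) → Option (Fin 3) × Option (Fin 3) → Prop)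
    (Ph : Fin 3 → Finset (Fin 6) → Finset (Fin 6) → Prop)
    (hPc : IsCouplePref Pc)
    (hchain : ∀ a b a' b' : Fin 3, crank11 a b < crank11 a' b' →
      Pc (some a, some b) (some a', some b'))
    (hPh : ∀ h, IsFeasiblePref 2 (Ph h))
    (hresp : ∀ h, Responsive 2 (Ph h) (Pt11 h)) :
    ∀ μ : Matching (Fin 3) (Fin 6) (fun _ => 2),
      ¬ Stable (k := 1) ![0] ![1] Pd11 (fun _ => Pc) Ph μ := by
  intro μ hst
  obtain ⟨hsingle, hcouple⟩ := hst
  have single : ∀ (h : Fin 3) (s c : Fin 6), s ≠ 0 → s ≠ 1 → Pd11 s (some h) (μ.assign s) →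
      ¬ ∀ e, μ.assign e = some h → e = c ∨ Pt11 h (some s) (some e) := by
    intro h s c hs0 hs1 hp hc
    refine hsingle h s (fun i => ?_) ⟨hp, interested_of_one_better hresp c ?_ hc⟩
    · fin_cases i; exact ⟨hs0, hs1⟩
    · intro he
      rw [he] at hp
      exact lt_irrefl _ hp
  have couple : ∀ hf hm : Fin 3, ¬ blocksCouple Ph Pc 0 1 μ hf hm := fun hf hm => hcouple 0 hf hm
  have hs3 : μ.assign 4 = some 0 := by
    by_contra hne
    have hp : ∀ x : Option (Fin 3), x ≠ some 0 → Pd11 4 (some 0) x := by decide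
    have ht : ∀ e : Fin 6, e = 4 ∨ Pt11 0 (some 4) (some e) := by decide
    exact single 0 4 4 (by decide) (by decide) (hp _ hne) fun e _ => ht e
  have hs4 : μ.assign 5 = some 1 := by
    by_contra hne
    have hp : ∀ x : Option (Fin 3), x ≠ some 1 → Pd11 5 (some 1) x := by decide
    have ht : ∀ e : Fin 6, e = 5 ∨ Pt11 1 (some 5) (some e) := by decide
    exact single 1 5 5 (by decide) (by decide) (hp _ hne) fun e _ => ht e
  by_cases hs1 : μ.assign 2 = some 1
  · have hm : μ.assign 1 ≠ some 1 := fun hm =>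
      absurd (full (by decide) hs4 hs1 hm) (by decide)
    have im : hospInterested Ph μ 1 {1} := by
      refine interested_of_one_better hresp 5 hm fun e he => ?_
      rcases full (by decide) hs4 hs1 he with rfl | rfl <;> decide
    have jf : μ.assign 0 ≠ some 0 → hospInterested Ph μ 0 {0} := by
      intro hf
      refine interested_of_one_better hresp 4 hf fun e he => ?_
      have ht : ∀ e : Fin 6, e = 0 ∨ e = 2 ∨ e = 5 ∨ e = 4 ∨ Pt11 0 (some 0) (some e) := by decide
      rcases ht e with rfl | rfl | rfl | h
      · exact absurd he hf
      · rw [hs1] at he; exact absurd he (by decide)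
      · rw [hs4] at he; exact absurd he (by decide)
      · exact h
    refine couple 0 1 ⟨couple_prefers hPc hchain _ _ _ _ ?_, fun _ hf _ => ⟨jf hf, im⟩,
      fun _ _ _ => im, fun _ h _ => absurd h hm, fun h => absurd h (by decide)⟩
    intro a b _ hb
    have hb1 : b ≠ 1 := fun h => hm (h ▸ hb)
    have hr : ∀ a b : Fin 3, b ≠ 1 → crank11 0 1 < crank11 a b := by decide
    exact hr a b hb1
  · have hs1' : μ.assign 2 = some 0 := by
      by_contra hne
      have hp : ∀ x : Option (Fin 3), x ≠ some 1 → x ≠ some 0 → Pd11 2 (some 0) x := by decide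
      have ht : ∀ e : Fin 6, e = 2 ∨ e = 5 ∨ e = 4 ∨ Pt11 0 (some 2) (some e) := by decide
      refine single 0 2 4 (by decide) (by decide) (hp _ hs1 hne) fun e he => ?_
      rcases ht e with rfl | rfl | h
      · exact absurd he hne
      · rw [hs4] at he; exact absurd he (by decide)
      · exact h
    have h1 : ∀ e, μ.assign e = some 0 → e = 4 ∨ e = 2 := fun e => full (by decide) hs3 hs1'
    have hf : μ.assign 0 ≠ some 0 := fun h => absurd (h1 0 h) (by decide)
    have hfm : μ.assign 0 = some 1 ∨ μ.assign 1 = some 1 := by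
      by_contra! hne
      have ht : ∀ e : Fin 6, e = 0 ∨ e = 1 ∨ e = 2 ∨ e = 4 ∨ e = 5 ∨
        Pt11 1 (some 2) (some e) := by decide
      refine single 1 2 5 (by decide) (by decide) (by rw [hs1']; decide) fun e he => ?_
      rcases ht e with rfl | rfl | rfl | rfl | h
      · exact absurd he hne.1
      · exact absurd he hne.2
      · exact absurd he hs1
      · rw [hs3] at he; exact absurd he (by decide)
      · exact h
    refine couple 2 2 ⟨couple_prefers hPc hchain _ _ _ _ ?_, fun h => absurd rfl h,
      fun h => absurd rfl h, fun h => absurd rfl h, fun _ => ?_⟩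
    · intro a b ha hb
      have hr : ∀ a b : Fin 3, a ≠ 0 → (a = 1 ∨ b = 1) → crank11 2 2 < crank11 a b := by decide
      rw [ha, hb] at hfm
      exact hr a b (fun h => hf (h ▸ ha)) (by simpa using hfm)
    ·
      -- Discarding everyone before hiring turns the set held by `h₃` into exactly `{f, m}`.
      refine ⟨μ.toSet 2, subset_rfl, ?_, ?_⟩ <;> rw [Finset.sdiff_self, Finset.empty_union]
      · decide
      · refine couple_better (hPh 2) (hresp 2) (fun e he => ?_) ?_
        · have he := Matching.mem_toSet.1 he
          have ht : ∀ e : Fin 6, e = 2 ∨ e = 4 ∨ e = 5 ∨ e ∈ ({0, 1, 3} : Finset (Fin 6)) := by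
            decide
          rcases ht e with rfl | rfl | rfl | h
          · rw [hs1'] at he; exact absurd he (by decide)
          · rw [hs3] at he; exact absurd he (by decide)
          · rw [hs4] at he; exact absurd he (by decide)
          · exact h
        · rw [Matching.mem_toSet, Matching.mem_toSet]
          rintro ⟨h0, h1⟩
          rw [h0, h1] at hfm
          exact absurd hfm (by decide)

end CouplesMarket
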